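/- For every n ≥ 12, the complement of the cycle C_n on n vertices satisfies γ_MR(C̄_n) = −1. -/

import Mathlib

open Finset

namespace MRD

variable {V : Type*}

open scoped Classical

/-- Sum of `f` over the closed neighborhood of `v` in `G`:
`f(N[v]) = \sum_{u \in N[v]} f(u)`. -/
noncomputable def closedNbhdSum [Fintype V] (G : SimpleGraph V) (f : V → ℤ) (v : V) : ℤ :=
  ∑ u ∈ Finset.univ.filter (fun u => G.Adj v u ∨ u = v), f u

/-- `f : V → {-1, 1, 2}` is a Majority Roman Dominating Function (MRDF) on `G`:
(i) `f(N[v]) ≥ 1` for at least half of the vertices, and (ii) every vertex with value `-1`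
is adjacent to a vertex with value `2`. -/
noncomputable def IsMRDF [Fintype V] (G : SimpleGraph V) (f : V → ℤ) : Prop :=
  (∀ v, f v = -1 ∨ f v = 1 ∨ f v = 2) ∧
  Fintype.card V ≤ 2 * (Finset.univ.filter (fun v => 1 ≤ closedNbhdSum G f v)).card ∧
  (∀ u, f u = -1 → ∃ w, G.Adj u w ∧ f w = 2)

/-- The majority Roman domination number `γ_MR(G)`: the minimum weight
`w(f) = ∑_v f(v)` over all MRDFs `f` on `G`. -/
noncomputable def mrdNum [Fintype V] (G : SimpleGraph V) : ℤ :=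
  sInf {w : ℤ | ∃ f : V → ℤ, IsMRDF G f ∧ w = ∑ v, f v}

/-- The join `G ∨ H` of two simple graphs: disjoint union plus all edges between the parts. -/
def join {α β : Type*} (G : SimpleGraph α) (H : SimpleGraph β) : SimpleGraph (α ⊕ β) where
  Adj x y :=
    match x, y with
    | .inl a, .inl b => G.Adj a b
    | .inr a, .inr b => H.Adj a b
    | .inl _, .inr _ => True
    | .inr _, .inl _ => True
  symm := by refine ⟨?_⟩; rintro (a | a) (b | b) h <;> simp_all [SimpleGraph.adj_comm]
  loopless := by refine ⟨?_⟩; rintro (a | a) h <;> simp_all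

/-- The corona `G ∘ H` of two simple graphs: one copy of `G` and `|V(G)|` copies of `H`,
where the `v`-th vertex of `G` is joined to every vertex of the `v`-th copy of `H`. -/
def corona {α β : Type*} (G : SimpleGraph α) (H : SimpleGraph β) : SimpleGraph (α ⊕ α × β) where
  Adj x y :=
    match x, y with
    | .inl u, .inl v => G.Adj u v
    | .inr p, .inr q => p.1 = q.1 ∧ H.Adj p.2 q.2
    | .inl u, .inr p => u = p.1
    | .inr p, .inl u => u = p.1
  symm := by
    refine ⟨?_⟩; rintro (u | ⟨u, x⟩) (v | ⟨v, y⟩) h <;> simp_all [SimpleGraph.adj_comm, eq_comm]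
  loopless := by refine ⟨?_⟩; rintro (u | ⟨u, x⟩) h <;> simp_all

/-- `S` is a dominating set of `G`. -/
def IsDomSet (G : SimpleGraph V) (S : Finset V) : Prop :=
  ∀ v, v ∉ S → ∃ u ∈ S, G.Adj v u

/-- The domination number `γ(G)`. -/
noncomputable def domNum [Fintype V] (G : SimpleGraph V) : ℕ :=
  sInf {k | ∃ S : Finset V, IsDomSet G S ∧ S.card = k}

/-- A set of vertices is independent if no two of its vertices are adjacent. -/
def IsIndepSet (G : SimpleGraph V) (S : Finset V) : Prop :=
  ∀ a ∈ S, ∀ b ∈ S, ¬ G.Adj a b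

/-- The independence number `β₀(G)`. -/
noncomputable def indepNum [Fintype V] (G : SimpleGraph V) : ℕ :=
  sSup {k | ∃ S : Finset V, IsIndepSet G S ∧ S.card = k}

/-- The cocktail party graph `K_{2n} - M` (complete graph minus a perfect matching),
realized on `Fin n × Fin 2`: `(i,a)` and `(j,b)` are adjacent iff `i ≠ j`. -/
def cocktail (n : ℕ) : SimpleGraph (Fin n × Fin 2) where
  Adj x y := x.1 ≠ y.1
  symm := ⟨fun _ _ h => h.symm⟩
  loopless := ⟨fun _ h => h rfl⟩

end MRD

/-!
In the complement of `G`, a closed neighborhood omits exactly the `G`-neighbors, so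
`f(N[v]) = w(f) - ∑ f(u)` over the `G`-neighbors `u` of `v`. As `f ≥ -1`, a single vertex with
`f(N[v]) ≥ 1` already forces `w(f) ≥ 1 - Δ(G)`. For regular `G` this is attained by a labelling of
weight `1 - Δ(G)` as soon as half of the vertices have all their `G`-neighbors labelled `-1` and
every `-1` sees a `2` in the complement.

On a cycle, put the positive labels on the first `⌊(n + 1) / 3⌋` even positions. The even vertices
then have odd neighbors, all labelled `-1`; for odd `n` the vertex `n - 2` makes up for the vertex
`n - 1`, which is adjacent to `0`.
-/

namespace MRD

section Complement

variable {V : Type*} [Fintype V] {G : SimpleGraph V} [DecidableRel G.Adj]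

lemma closedNbhdSum_compl (f : V → ℤ) (v : V) :
    closedNbhdSum Gᶜ f v = ∑ u, f u - ∑ u ∈ G.neighborFinset v, f u := by
  classical
  rw [closedNbhdSum, ← sum_compl_add_sum (G.neighborFinset v) f, add_sub_cancel_right]
  refine sum_congr (ext fun u ↦ ?_) fun _ _ ↦ rfl
  have : u = v → ¬G.Adj v u := by rintro rfl; exact G.irrefl
  simp only [SimpleGraph.compl_adj, mem_filter_univ, mem_compl, SimpleGraph.mem_neighborFinset]
  tauto

lemma closedNbhdSum_compl_eq_add_degree {f : V → ℤ} {v : V}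
    (hf : ∀ u ∈ G.neighborFinset v, f u = -1) :
    closedNbhdSum Gᶜ f v = ∑ u, f u + G.degree v := by
  rw [closedNbhdSum_compl, sum_congr rfl hf, sum_const, smul_neg, nsmul_one, sub_neg_eq_add,
    SimpleGraph.card_neighborFinset_eq_degree]

lemma closedNbhdSum_compl_le_add_degree {f : V → ℤ} (hf : ∀ u, -1 ≤ f u) (v : V) :
    closedNbhdSum Gᶜ f v ≤ ∑ u, f u + G.degree v := by
  have := card_nsmul_le_sum (G.neighborFinset v) f (-1) fun u _ ↦ hf u
  rw [SimpleGraph.card_neighborFinset_eq_degree, smul_neg, nsmul_one] at this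
  rw [closedNbhdSum_compl]
  linarith

lemma IsMRDF.neg_one_le {H : SimpleGraph V} {f : V → ℤ} (hf : IsMRDF H f) (v : V) : -1 ≤ f v := by
  have := hf.1 v
  lia

lemma IsMRDF.exists_one_le_closedNbhdSum [Nonempty V] {H : SimpleGraph V} {f : V → ℤ}
    (hf : IsMRDF H f) : ∃ v, 1 ≤ closedNbhdSum H f v := by
  have hcard := Fintype.card_pos.trans_le hf.2.1
  obtain ⟨v, hv⟩ := card_pos.1 (pos_of_mul_pos_right hcard zero_le_two)
  exact ⟨v, (mem_filter_univ v).1 hv⟩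

lemma IsMRDF.one_sub_maxDegree_le_sum [Nonempty V] {f : V → ℤ} (hf : IsMRDF Gᶜ f) :
    1 - (G.maxDegree : ℤ) ≤ ∑ v, f v := by
  obtain ⟨v, hv⟩ := hf.exists_one_le_closedNbhdSum
  have hsum := closedNbhdSum_compl_le_add_degree (G := G) hf.neg_one_le v
  have hdeg : (G.degree v : ℤ) ≤ G.maxDegree := mod_cast G.degree_le_maxDegree v
  linarith

end Complement

section RomanLabel

variable {V : Type*} [DecidableEq V] {P B : Finset V}

/-- The labelling with values in `{-1, 1, 2}` whose positive labels sit on `P`, those equal to `1`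
being on `B`. It is the candidate MRDF; `B` is the small exceptional set used to tune the weight. -/
def romanLabel (P B : Finset V) (v : V) : ℤ :=
  if v ∈ P then if v ∈ B then 1 else 2 else -1

lemma romanLabel_eq_neg_one_iff {v : V} : romanLabel P B v = -1 ↔ v ∉ P := by
  unfold romanLabel
  split_ifs <;> simp [*]

lemma romanLabel_eq_two_iff {v : V} : romanLabel P B v = 2 ↔ v ∈ P \ B := by
  unfold romanLabel
  split_ifs <;> simp [*]

lemma romanLabel_mem (P B : Finset V) (v : V) :
    romanLabel P B v = -1 ∨ romanLabel P B v = 1 ∨ romanLabel P B v = 2 := by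
  unfold romanLabel
  split_ifs <;> simp

variable [Fintype V]

lemma sum_romanLabel (hB : B ⊆ P) :
    ∑ v, romanLabel P B v = 3 * #P - #B - Fintype.card V := by
  have hlabel (v : V) :
      romanLabel P B v = 3 * (if v ∈ P then 1 else 0) - (if v ∈ B then 1 else 0) - 1 := by
    have := @hB v
    unfold romanLabel
    split_ifs <;> simp_all
  simp [hlabel, sum_sub_distrib, mul_comm]

variable {G : SimpleGraph V} [DecidableRel G.Adj] {d : ℕ}

lemma isMRDF_compl_romanLabel (hG : G.IsRegularOfDegree d)
    (hweight : ∑ v, romanLabel P B v = 1 - d)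
    (hmajority : Fintype.card V ≤ 2 * #{v | Disjoint (G.neighborFinset v) P})
    (hroman : ∀ u ∉ P, ∃ w ∈ P \ B, Gᶜ.Adj u w) :
    IsMRDF Gᶜ (romanLabel P B) := by
  refine ⟨romanLabel_mem P B, hmajority.trans ?_, fun u hu ↦ ?_⟩
  · gcongr with v _
    intro hv
    have hneg (u) (hu : u ∈ G.neighborFinset v) : romanLabel P B u = -1 :=
      romanLabel_eq_neg_one_iff.2 (disjoint_left.1 hv hu)
    rw [closedNbhdSum_compl_eq_add_degree hneg, hweight, hG.degree_eq, sub_add_cancel]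
  · obtain ⟨w, hw, huw⟩ := hroman u (romanLabel_eq_neg_one_iff.1 hu)
    exact ⟨w, huw, romanLabel_eq_two_iff.2 hw⟩

theorem mrdNum_compl_of_isRegularOfDegree [Nonempty V] (hG : G.IsRegularOfDegree d) (hB : B ⊆ P)
    (hcard : 3 * #P + d = Fintype.card V + #B + 1)
    (hmajority : Fintype.card V ≤ 2 * #{v | Disjoint (G.neighborFinset v) P})
    (hroman : ∀ u ∉ P, ∃ w ∈ P \ B, Gᶜ.Adj u w) :
    mrdNum Gᶜ = 1 - d := by
  have hweight : ∑ v, romanLabel P B v = 1 - d := by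
    rw [sum_romanLabel hB]
    lia
  refine IsLeast.csInf_eq ⟨⟨_, isMRDF_compl_romanLabel hG hweight hmajority hroman,
    hweight.symm⟩, ?_⟩
  rintro _ ⟨f, hf, rfl⟩
  simpa only [hG.maxDegree_eq] using hf.one_sub_maxDegree_le_sum

end RomanLabel

section Cycle

variable {n : ℕ}

lemma isRegularOfDegree_cycleGraph (hn : 3 ≤ n) :
    (SimpleGraph.cycleGraph n).IsRegularOfDegree 2 := by
  obtain ⟨k, rfl⟩ := Nat.exists_eq_add_of_le' hn
  exact fun _ ↦ SimpleGraph.cycleGraph_degree_three_le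

lemma val_of_cycleGraph_adj {u v : Fin n} (h : (SimpleGraph.cycleGraph n).Adj u v) :
    (u : ℕ) = v + 1 ∨ (v : ℕ) = u + 1 ∨ ((u : ℕ) = 0 ∧ (v : ℕ) + 1 = n) ∨
      ((v : ℕ) = 0 ∧ (u : ℕ) + 1 = n) := by
  have hsub {a b : Fin n} (hab : (a - b).val = 1) :
      (a : ℕ) = b + 1 ∨ ((a : ℕ) = 0 ∧ (b : ℕ) + 1 = n) := by
    rcases le_or_gt b a with hle | hlt
    · have := Fin.sub_val_of_le hle
      lia
    · have := Fin.coe_sub_iff_lt.2 hlt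
      lia
  have := (SimpleGraph.cycleGraph_adj'.1 h).imp hsub hsub
  lia

/-- The vertices `2 * i` of the cycle on `Fin n`, for `i ∈ I`. -/
def evenVertices (n : ℕ) (I : Finset ℕ) : Finset (Fin n) :=
  {v | ∃ i ∈ I, (v : ℕ) = 2 * i}

lemma mem_evenVertices {I : Finset ℕ} {v : Fin n} :
    v ∈ evenVertices n I ↔ ∃ i ∈ I, (v : ℕ) = 2 * i :=
  mem_filter_univ v

lemma evenVertices_mono {I J : Finset ℕ} (h : I ⊆ J) : evenVertices n I ⊆ evenVertices n J :=
  monotone_filter_right _ fun _ _ ⟨i, hi, hv⟩ ↦ ⟨i, h hi, hv⟩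

lemma card_evenVertices {I : Finset ℕ} (hI : ∀ i ∈ I, 2 * i < n) : #(evenVertices n I) = #I := by
  refine (card_bij (fun i hi ↦ ⟨2 * i, hI i hi⟩) (fun i hi ↦ mem_evenVertices.2 ⟨i, hi, rfl⟩)
    (fun i _ j _ h ↦ ?_) fun v hv ↦ ?_).symm
  · simpa using h
  · obtain ⟨i, hi, hv⟩ := mem_evenVertices.1 hv
    exact ⟨i, hi, Fin.ext hv.symm⟩

lemma disjoint_neighborFinset_evenVertices_range {s : ℕ} (hs : 2 * s + 3 ≤ n) {v : Fin n}
    (hv : (Even (v : ℕ) ∧ (v : ℕ) + 2 ≤ n) ∨ (v : ℕ) + 2 = n) :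
    Disjoint ((SimpleGraph.cycleGraph n).neighborFinset v) (evenVertices n (range s)) := by
  refine disjoint_left.2 fun u hu hmem ↦ ?_
  obtain ⟨i, hi, hui⟩ := mem_evenVertices.1 hmem
  have hadj := val_of_cycleGraph_adj ((SimpleGraph.mem_neighborFinset _ _ _).1 hu)
  rw [mem_range] at hi
  grind

lemma le_two_mul_card_disjoint_neighborFinset_evenVertices {s : ℕ} (hs : 2 * s + 3 ≤ n) :
    n ≤ 2 * #{v | Disjoint ((SimpleGraph.cycleGraph n).neighborFinset v)
      (evenVertices n (range s))} := by
  suffices (n + 1) / 2 ≤ #{v | Disjoint ((SimpleGraph.cycleGraph n).neighborFinset v)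
      (evenVertices n (range s))} by lia
  -- `0, 2, 4, …`, except that for odd `n` the last vertex `n - 1` is replaced by `n - 2`
  refine le_card_of_inj_on_range (fun i ↦ ⟨min (2 * i) (n - 2), by lia⟩) (fun i _ ↦ ?_)
    fun i hi j hj hij ↦ ?_
  · refine (mem_filter_univ _).2 (disjoint_neighborFinset_evenVertices_range hs ?_)
    grind
  · rw [Fin.mk.injEq] at hij
    lia

lemma exists_mem_evenVertices_compl_cycleGraph_adj {s p : ℕ} (hp : p + 1 < s) (hs : 3 ≤ s)
    (hsn : 2 * s < n) (u : Fin n) (hu : u ∉ evenVertices n (range s)) :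
    ∃ w ∈ evenVertices n (range s) \ evenVertices n (Icc 1 p),
      (SimpleGraph.cycleGraph n)ᶜ.Adj u w := by
  have hmem (i : ℕ) (his : i < s) (hip : i = 0 ∨ p < i) :
      (⟨2 * i, by lia⟩ : Fin n) ∈ evenVertices n (range s) \ evenVertices n (Icc 1 p) := by
    grind [mem_evenVertices]
  have hadj {w : Fin n} (hw : w ∈ evenVertices n (range s) \ evenVertices n (Icc 1 p))
      (huw : ¬(SimpleGraph.cycleGraph n).Adj u w) : (SimpleGraph.cycleGraph n)ᶜ.Adj u w :=
    (SimpleGraph.compl_adj ..).2 ⟨fun h ↦ hu (h ▸ (mem_sdiff.1 hw).1), huw⟩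
  have hfirst := hmem 0 (by lia) (by lia)
  have hlast := hmem (s - 1) (by lia) (by lia)
  -- `0` and `2 * (s - 1)` have no common neighbor, since `4 ≤ 2 * (s - 1) ≤ n - 3`
  by_cases h₀ : (SimpleGraph.cycleGraph n).Adj u ⟨2 * 0, by lia⟩
  · refine ⟨_, hlast, hadj hlast fun h₁ ↦ ?_⟩
    have := val_of_cycleGraph_adj h₀
    have := val_of_cycleGraph_adj h₁
    lia
  · exact ⟨_, hfirst, hadj hfirst h₀⟩

end Cycle

end MRD

open MRD in
theorem mrdNum_compl_cycle_general (n : ℕ) (hn : 9 ≤ n) :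
    mrdNum (SimpleGraph.cycleGraph n)ᶜ = -1 := by
  have : NeZero n := ⟨by lia⟩
  -- weight `3 * s - p - n = -1`
  obtain ⟨s, p, hp, hsp⟩ : ∃ s p, p ≤ 2 ∧ 3 * s + 1 = n + p :=
    ⟨(n + 1) / 3, 3 * ((n + 1) / 3) + 1 - n, by lia, by lia⟩
  have hsub : Icc 1 p ⊆ range s := fun i hi ↦ by grind
  have hcard (I : Finset ℕ) (hI : I ⊆ range s) : #(evenVertices n I) = #I :=
    card_evenVertices fun i hi ↦ by grind
  refine mrdNum_compl_of_isRegularOfDegree (isRegularOfDegree_cycleGraph (by lia))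
    (evenVertices_mono hsub) ?_ ?_
    (exists_mem_evenVertices_compl_cycleGraph_adj (by lia) (by lia) (by lia))
  · rw [hcard _ subset_rfl, hcard _ hsub, card_range, Nat.card_Icc, Fintype.card_fin]
    lia
  · rw [Fintype.card_fin]
    exact le_two_mul_card_disjoint_neighborFinset_evenVertices (by lia)

/-- For `n ≥ 12`, the complement of the cycle on `n` vertices satisfies
`γ_MR(C̄_n) = -1`. -/
theorem mrdNum_compl_cycle (n : ℕ) (hn : 12 ≤ n) :
    MRD.mrdNum (SimpleGraph.cycleGraph n)ᶜ = -1 :=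
  mrdNum_compl_cycle_general n (by lia)
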